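/- Each Zimin word is an isoterm relative to the semigroup UT₃(ℝ): for every n ≥ 1 and every element v of the free semigroup on ℕ, if UT₃(ℝ) satisfies the identity Z_n ≈ v (i.e., φ(Z_n) = φ(v) for every semigroup homomorphism φ from the free semigroup on ℕ to UT₃(ℝ)), then v = Z_n. -/

import Mathlib

/-!
Write words as lists. Deleting the letter `x₁` from `Z_{n+1}` gives a copy of `Z_n` on the
letters `x₂, x₃, …`; conversely `Z_{n+1}` is recovered from that copy by placing `x₁` in every gap,
both ends included (`interleave`). This allows an induction on `n`.

For a letter weight `p`, the matrices `adjMat (p c)`, with diagonal `(1, 0, 1)` and `p c` in the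
places `(1,2)` and `(2,3)`, multiply along a word so that the product records the weight of the
first letter, the weight of the last letter, and the sum of `p c * p d` over all factors `cd` of
length two (`prod_adjMat`). Taking for `p` the indicators of `x₁` and of its complement, an identity
`Z_{n+1} ≈ v` forces `v` to begin and end with `x₁` and to have neither a factor `x₁x₁` nor a factor
of two letters different from `x₁`; so `v` also has `x₁` exactly in the gaps of some word `u`
without `x₁` (`exists_interleave`). Substituting the identity matrix for `x₁` shows that `u` and the
copy of `Z_n` form an identity of `UT₃(ℝ)`, so they coincide by the induction hypothesis.
-/

/-- The subsemigroup `UT₃(ℝ)` of the multiplicative semigroup of real `3 × 3` matrices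
consisting of the upper triangular matrices whose main-diagonal entries are 0s and/or 1s. -/
def UT3 : Subsemigroup (Matrix (Fin 3) (Fin 3) ℝ) where
  carrier := {A | (∀ i j : Fin 3, (j : ℕ) < (i : ℕ) → A i j = 0) ∧
    ∀ i : Fin 3, A i i = 0 ∨ A i i = 1}
  mul_mem' := by
    rintro A B ⟨hA1, hA2⟩ ⟨hB1, hB2⟩
    constructor
    · intro i j hij
      rw [Matrix.mul_apply]
      apply Finset.sum_eq_zero
      intro k _
      rcases lt_or_ge (k : ℕ) (i : ℕ) with h | h
      · rw [hA1 i k h, zero_mul]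
      · rw [hB1 k j (lt_of_lt_of_le hij h), mul_zero]
    · intro i
      rw [Matrix.mul_apply, Finset.sum_eq_single i]
      · rcases hA2 i with h1 | h1 <;> rcases hB2 i with h2 | h2 <;>
          rw [h1, h2] <;> simp
      · intro k _ hk
        rcases lt_or_ge (k : ℕ) (i : ℕ) with h | h
        · rw [hA1 i k h, zero_mul]
        · have hik : (i : ℕ) < (k : ℕ) :=
            lt_of_le_of_ne h (fun he => hk (Fin.val_injective he.symm))
          rw [hB1 k i hik, mul_zero]
      · intro h
        exact absurd (Finset.mem_univ i) h

/-- The Zimin words, as elements of the free semigroup on the countable alphabet `ℕ`,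
with the letter `xₙ` rendered as the natural number `n`.  Here `ZiminW n` is the Zimin
word `Z_{n+1}`; in particular `ZiminW 0 = Z₁ = x₁` and
`ZiminW (n+1) = Z_{n+2} = Z_{n+1} x_{n+2} Z_{n+1}`. -/
def ZiminW : ℕ → FreeSemigroup ℕ
  | 0 => FreeSemigroup.of 1
  | n + 1 => ZiminW n * FreeSemigroup.of (n + 2) * ZiminW n

/-! ### Zimin words by interleaving -/

/-- `UT₃(ℝ)` satisfies the identity `u ≈ v`, for words given as lists; the empty word is allowed
and evaluates to the identity matrix. -/
def UTIdentity (u v : List ℕ) : Prop :=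
  ∀ f : ℕ → Matrix (Fin 3) (Fin 3) ℝ, (∀ c, f c ∈ UT3) → (u.map f).prod = (v.map f).prod

/-- The word obtained from `u` by writing `a` in every gap, both ends included. -/
def interleave (a : ℕ) : List ℕ → List ℕ
  | [] => [a]
  | b :: u => a :: b :: interleave a u

/-- The Zimin word of rank `n` on the letters `k, k + 1, …, k + n - 1`, built by interleaving;
rank `0` gives the empty word. -/
def ziminList : ℕ → ℕ → List ℕ
  | _, 0 => []
  | k, n + 1 => interleave k (ziminList (k + 1) n)

theorem interleave_append (a b : ℕ) (u v : List ℕ) :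
    interleave a (u ++ b :: v) = interleave a u ++ b :: interleave a v := by
  induction u with
  | nil => rfl
  | cons c u ih => simp [interleave, ih]

theorem mem_interleave {a c : ℕ} {u : List ℕ} (h : c ∈ interleave a u) : c = a ∨ c ∈ u := by
  induction u with
  | nil => simpa [interleave] using h
  | cons b u ih =>
    simp only [interleave, List.mem_cons] at h ⊢
    tauto

theorem le_of_mem_ziminList {c : ℕ} (n : ℕ) : ∀ {k : ℕ}, c ∈ ziminList k n → k ≤ c := by
  induction n with
  | zero => intro k h; simp [ziminList] at h
  | succ n ih =>
    intro k h
    rcases mem_interleave h with h | h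
    · exact h.ge
    · exact (Nat.le_succ k).trans (ih h)

/-- The interleaving recursion agrees with the usual recursion of the Zimin words. -/
theorem ziminList_succ (n : ℕ) :
    ∀ k, ziminList k (n + 1) = ziminList k n ++ (k + n) :: ziminList k n := by
  induction n with
  | zero => intro k; rfl
  | succ n ih =>
    intro k
    rw [ziminList, ih (k + 1), interleave_append, show k + 1 + n = k + (n + 1) by omega]
    rfl

/-! ### Matrices that record adjacent letters -/

/-- The matrix with diagonal `(1, 0, 1)`, both entries next to the diagonal equal to `x`, and
zeros elsewhere. -/
def adjMat (x : ℝ) : Matrix (Fin 3) (Fin 3) ℝ := !![1, x, 0; 0, 0, x; 0, 0, 1]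

theorem adjMat_mem (x : ℝ) : adjMat x ∈ UT3 := by
  constructor
  · intro i j hij
    fin_cases i <;> fin_cases j <;> simp_all [adjMat]
  · intro i
    fin_cases i <;> simp [adjMat]

theorem one_mem_UT3 : (1 : Matrix (Fin 3) (Fin 3) ℝ) ∈ UT3 :=
  ⟨fun i j hij => Matrix.one_apply_ne (by rintro rfl; exact lt_irrefl _ hij),
    fun i => Or.inr (Matrix.one_apply_eq i)⟩

theorem zero_mem_UT3 : (0 : Matrix (Fin 3) (Fin 3) ℝ) ∈ UT3 :=
  ⟨fun _ _ _ => rfl, fun _ => Or.inl rfl⟩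

/-- The sum of `p c * p d` over the occurrences of factors `cd` of length two. -/
def adjSum (p : ℕ → ℝ) : List ℕ → ℝ
  | [] => 0
  | [_] => 0
  | c :: d :: w => p c * p d + adjSum p (d :: w)

theorem prod_adjMat (p : ℕ → ℝ) (w : List ℕ) : ∀ c : ℕ,
    ((c :: w).map fun d => adjMat (p d)).prod =
      !![1, p ((c :: w).getLast (List.cons_ne_nil c w)), adjSum p (c :: w);
        0, 0, p c; 0, 0, 1] := by
  induction w with
  | nil => intro c; simp [adjMat, adjSum]
  | cons d w ih =>
    intro c
    rw [List.map_cons, List.prod_cons, ih d, List.getLast_cons (List.cons_ne_nil d w)]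
    ext i j
    fin_cases i <;> fin_cases j <;>
      simp [adjMat, adjSum, Matrix.mul_apply, Fin.sum_univ_three, add_comm]

theorem adjSum_nonneg {p : ℕ → ℝ} (hp : ∀ c, 0 ≤ p c) : ∀ w, 0 ≤ adjSum p w
  | [] => le_rfl
  | [_] => le_rfl
  | c :: d :: w => add_nonneg (mul_nonneg (hp c) (hp d)) (adjSum_nonneg hp (d :: w))

/-- The indicator of the letter `a`. -/
def isL (a c : ℕ) : ℝ := if c = a then 1 else 0

/-- The indicator of the letters other than `a`. -/
def notL (a c : ℕ) : ℝ := if c = a then 0 else 1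

theorem isL_nonneg (a c : ℕ) : 0 ≤ isL a c := by unfold isL; split_ifs <;> simp

theorem notL_nonneg (a c : ℕ) : 0 ≤ notL a c := by unfold notL; split_ifs <;> simp

theorem notL_eq_zero {a c : ℕ} : notL a c = 0 ↔ c = a := by simp [notL]

theorem interleave_eq_cons (a : ℕ) (u : List ℕ) : ∃ t, interleave a u = a :: t := by
  cases u <;> exact ⟨_, rfl⟩

theorem getLast?_interleave (a : ℕ) (u : List ℕ) : (interleave a u).getLast? = some a := by
  induction u with
  | nil => rfl
  | cons b u ih =>
    obtain ⟨t, ht⟩ := interleave_eq_cons a u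
    simp only [interleave, ht, List.getLast?_cons_cons] at ih ⊢
    exact ih

theorem adjSum_interleave {p : ℕ → ℝ} {a : ℕ} {u : List ℕ} (h : ∀ b ∈ u, p a * p b = 0) :
    adjSum p (interleave a u) = 0 := by
  induction u with
  | nil => rfl
  | cons b u ih =>
    have ih' := ih fun c hc => h c (List.mem_cons_of_mem b hc)
    have hb := h b List.mem_cons_self
    obtain ⟨t, ht⟩ := interleave_eq_cons a u
    rw [ht] at ih'
    simp [interleave, ht, adjSum, ih', hb, mul_comm (p b)]

/-- A word that begins and ends with `a`, with no factor `aa` and no factor of two letters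
other than `a`, has `a` exactly in the gaps of a word without `a`. -/
theorem exists_interleave (a : ℕ) : ∀ w : List ℕ, (a :: w).getLast? = some a →
    adjSum (isL a) (a :: w) = 0 → adjSum (notL a) (a :: w) = 0 →
    ∃ u, a ∉ u ∧ a :: w = interleave a u
  | [], _, _, _ => ⟨[], by simp, rfl⟩
  | [d], hl, h1, _ => by
    have hd : d = a := by simpa using hl
    simp [adjSum, hd, isL] at h1
  | d :: e :: w, hl, h1, h2 => by
    simp only [adjSum] at h1 h2
    have n1 := adjSum_nonneg (isL_nonneg a) (e :: w)
    have n2 := adjSum_nonneg (notL_nonneg a) (e :: w)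
    have hd : d ≠ a := by
      rintro rfl
      have := isL_nonneg d e
      simp only [isL, if_true] at *
      linarith
    have ha : notL a a = 0 := by simp [notL]
    have hd1 : notL a d = 1 := by simp [notL, hd]
    have hd0 : isL a d = 0 := by simp [isL, hd]
    rw [hd0] at h1
    rw [ha, hd1] at h2
    have he : e = a := notL_eq_zero.1 (by linarith [notL_nonneg a e])
    subst he
    obtain ⟨u, hu, hw⟩ := exists_interleave e w (by simpa using hl) (by linarith)
      (by linarith)
    exact ⟨d :: u, by simp [hu, Ne.symm hd], by rw [interleave, hw]⟩

/-! ### The induction -/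

theorem prod_interleave {f : ℕ → Matrix (Fin 3) (Fin 3) ℝ} {a : ℕ} (ha : f a = 1)
    (u : List ℕ) : ((interleave a u).map f).prod = (u.map f).prod := by
  induction u with
  | nil => simp [interleave, ha]
  | cons b u ih => simp [interleave, ha, ih]

/-- Identities are inherited by the words left after deleting `a`: evaluate `a` at the identity
matrix. -/
theorem UTIdentity.of_interleave {a : ℕ} {u v : List ℕ} (hu : a ∉ u) (hv : a ∉ v)
    (h : UTIdentity (interleave a u) (interleave a v)) : UTIdentity u v := by
  intro f hf
  have key : ∀ w : List ℕ, a ∉ w → w.map (Function.update f a 1) = w.map f := fun w hw =>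
    List.map_congr_left fun c hc =>
      Function.update_of_ne (fun hca : c = a => hw (hca ▸ hc)) _ _
  have h' := h (Function.update f a 1) fun c => by
    by_cases hc : c = a
    · subst hc
      simpa using one_mem_UT3
    · simpa [hc] using hf c
  rwa [prod_interleave (by simp), prod_interleave (by simp), key u hu, key v hv] at h'

theorem eq_interleave_of_UTIdentity {a : ℕ} {u w : List ℕ} (hu : a ∉ u)
    (h : UTIdentity (interleave a u) w) : ∃ v, a ∉ v ∧ w = interleave a v := by
  obtain ⟨t, ht⟩ := interleave_eq_cons a u
  have hm : ∀ p : ℕ → ℝ, _ := fun p => h (fun d => adjMat (p d)) fun c => adjMat_mem _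
  have hlast := getLast?_interleave a u
  have hs1 : adjSum (isL a) (interleave a u) = 0 := adjSum_interleave fun b hb => by
    simp [isL, show b ≠ a from fun hba => hu (hba ▸ hb)]
  have hs2 : adjSum (notL a) (interleave a u) = 0 := adjSum_interleave fun b _ => by
    simp [notL]
  rw [ht] at hm hlast hs1 hs2
  have hlast' : (a :: t).getLast (List.cons_ne_nil a t) = a := by
    rw [List.getLast?_eq_some_getLast (List.cons_ne_nil a t)] at hlast
    exact Option.some.inj hlast
  cases w with
  | nil =>
    -- The middle diagonal entry vanishes for nonempty words only.
    have := congrFun (congrFun (hm (isL a)) 1) 1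
    rw [prod_adjMat] at this
    simp at this
  | cons c w =>
    simp only [prod_adjMat, hlast'] at hm
    have haa : notL a a = 0 := notL_eq_zero.2 rfl
    have hc : c = a := by
      have := congrFun (congrFun (hm (notL a)) 1) 2
      simp only [haa] at this
      exact notL_eq_zero.1 this.symm
    have hl : (c :: w).getLast (List.cons_ne_nil c w) = a := by
      have := congrFun (congrFun (hm (notL a)) 0) 1
      simp only [haa] at this
      exact notL_eq_zero.1 this.symm
    have e1 : adjSum (isL a) (a :: t) = adjSum (isL a) (c :: w) :=
      congrFun (congrFun (hm (isL a)) 0) 2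
    have e2 : adjSum (notL a) (a :: t) = adjSum (notL a) (c :: w) :=
      congrFun (congrFun (hm (notL a)) 0) 2
    subst hc
    refine exists_interleave c w ?_ (e1.symm.trans hs1) (e2.symm.trans hs2)
    rw [List.getLast?_eq_some_getLast (List.cons_ne_nil c w), hl]

theorem ziminList_isoterm (n : ℕ) : ∀ (k : ℕ) (w : List ℕ),
    UTIdentity (ziminList k n) w → w = ziminList k n := by
  induction n with
  | zero =>
    intro k w h
    cases w with
    | nil => rfl
    | cons c w =>
      have := h (fun _ => 0) fun _ => zero_mem_UT3
      simp [ziminList] at this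
  | succ n ih =>
    intro k w h
    have hk : k ∉ ziminList (k + 1) n := fun hk => by
      have := le_of_mem_ziminList n hk
      omega
    obtain ⟨v, hv, rfl⟩ := eq_interleave_of_UTIdentity hk h
    rw [ih (k + 1) v (UTIdentity.of_interleave hk hv h), ziminList]

/-! ### From lists to the free semigroup -/

/-- The list of letters of an element of the free semigroup. -/
def letters (v : FreeSemigroup ℕ) : List ℕ := v.head :: v.tail

theorem letters_mul (v w : FreeSemigroup ℕ) : letters (v * w) = letters v ++ letters w := by
  simp [letters]

theorem letters_injective : Function.Injective letters := fun v w h => by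
  rw [letters, letters, List.cons.injEq] at h
  exact FreeSemigroup.ext h.1 h.2

theorem letters_ZiminW (n : ℕ) : letters (ZiminW n) = ziminList 1 (n + 1) := by
  induction n with
  | zero => rfl
  | succ n ih =>
    rw [ZiminW, letters_mul, letters_mul, ih, ziminList_succ (n + 1),
      show 1 + (n + 1) = n + 2 by omega, List.append_assoc]
    rfl

theorem coe_lift (f : ℕ → Matrix (Fin 3) (Fin 3) ℝ) (hf : ∀ c, f c ∈ UT3)
    (v : FreeSemigroup ℕ) :
    ((FreeSemigroup.lift (fun c => (⟨f c, hf c⟩ : UT3)) v : UT3) : Matrix (Fin 3) (Fin 3) ℝ) =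
      ((letters v).map f).prod := by
  induction v using FreeSemigroup.recOnMul with
  | ih1 c => simp [letters]
  | ih2 c w h1 h2 => rw [map_mul, letters_mul, List.map_append, List.prod_append, ← h1, ← h2]; rfl

/-- Each Zimin word is an isoterm relative to `UT₃(ℝ)`: if `UT₃(ℝ)` satisfies the
identity `Zₙ ≈ v`, then `v = Zₙ`. -/
theorem zimin_isoterm_for_UT3 (n : ℕ) (v : FreeSemigroup ℕ)
    (h : ∀ φ : FreeSemigroup ℕ →ₙ* ↥UT3, φ (ZiminW n) = φ v) :
    v = ZiminW n := by
  apply letters_injective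
  rw [letters_ZiminW]
  refine ziminList_isoterm (n + 1) 1 _ fun f hf => ?_
  rw [← letters_ZiminW, ← coe_lift f hf, ← coe_lift f hf, h]
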